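/- arXiv:2305.17857 — 2 statements merged into one kernel-verified Lean document; each statement's English description precedes it below -/
import Mathlib

section
/- Let ν ∈ (0,1/10), h ∈ (0,1/100), and assume 𝐘 ⊂ B(0,h^{-1}) ⊂ ℝ² is ν-porous on lines on scales 1 to h^{-1}. Then there exist constants C_reg, C_gr ≥ 0 and α ∈ (0,1) depending only on ν, and smooth compactly supported functions ω_k : ℝ² → (−∞,0] for k ≥ 1, such that: ω_k = 0 for all sufficiently large k; supp ω_k ⊂ {2^{k−1} ≤ |x| ≤ 2^{k+1}}; ‖ω_k‖_{S¹₃} ≤ C_reg; Σ_{k≥1} q_k ≤ C_gr, where q_k := −inf_{θ∈S¹} T(|x|^{−2}ω_k)(0,θ); and the sum ω = Σ_{k≥1} ω_k satisfies ω(x) ≤ −|x|/(log|x|)^α for all x ∈ 𝐘 with |x| > 10. -/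
open MeasureTheory Real

noncomputable section

/-- Directional derivative of a function on `ℝ²` in the direction `v`. -/
def pd (v : ℝ × ℝ) (ψ : ℝ × ℝ → ℝ) : ℝ × ℝ → ℝ := fun p => fderiv ℝ ψ p v

/-- The X-ray transform `Tψ(s,θ)`. -/
def xray (ψ : ℝ × ℝ → ℝ) (s θ : ℝ) : ℝ :=
  ∫ t : ℝ, ψ (t * Real.cos θ - s * Real.sin θ, t * Real.sin θ + s * Real.cos θ)

/-- The function `x ↦ |x|⁻² ψ(x)` on `ℝ²`. -/
def invSq (ψ : ℝ × ℝ → ℝ) : ℝ × ℝ → ℝ := fun p => (p.1 ^ 2 + p.2 ^ 2)⁻¹ * ψ p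

/-- `q(ψ) := −inf_{θ ∈ S¹} T(|x|⁻²ψ)(0,θ)`. -/
def qOf (ψ : ℝ × ℝ → ℝ) : ℝ := -(⨅ θ : ℝ, xray (invSq ψ) 0 θ)

/-- The Kohn–Nirenberg norm `‖ψ‖_{S¹₃}` is at most `C`. -/
def KNle (ψ : ℝ × ℝ → ℝ) (C : ℝ) : Prop :=
  ∀ γ₁ γ₂ : ℕ, γ₁ + γ₂ ≤ 3 → ∀ p : ℝ × ℝ,
    |Real.sqrt (1 + p.1 ^ 2 + p.2 ^ 2) ^ ((γ₁ + γ₂ : ℤ) - 1) *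
      (pd (1, 0))^[γ₁] ((pd (0, 1))^[γ₂] ψ) p| ≤ C

/-- The dyadic annulus `{2^{k−1} ≤ |x| ≤ 2^{k+1}}` in `ℝ²`. -/
def annulus (k : ℕ) : Set (ℝ × ℝ) :=
  {p | (2 : ℝ) ^ ((k : ℤ) - 1) ≤ Real.sqrt (p.1 ^ 2 + p.2 ^ 2) ∧
       Real.sqrt (p.1 ^ 2 + p.2 ^ 2) ≤ 2 ^ (k + 1)}

/-- The Euclidean norm on `ℝ × ℝ`. -/
def enorm2 (p : ℝ × ℝ) : ℝ := Real.sqrt (p.1 ^ 2 + p.2 ^ 2)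

/-- The open Euclidean ball in `ℝ × ℝ`. -/
def eball2 (c : ℝ × ℝ) (r : ℝ) : Set (ℝ × ℝ) := {p | enorm2 (p.1 - c.1, p.2 - c.2) < r}

/-- `Y ⊆ ℝ²` is `ν`-porous on lines on scales `ρ₀` to `ρ₁`: every line segment of
(Euclidean) length `R ∈ [ρ₀, ρ₁]` contains a point `x` with `Y ∩ B(x, νR) = ∅`. -/
def LinePorous2 (ν ρ₀ ρ₁ : ℝ) (Y : Set (ℝ × ℝ)) : Prop :=
  ∀ a b : ℝ × ℝ, enorm2 (a.1 - b.1, a.2 - b.2) ∈ Set.Icc ρ₀ ρ₁ →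
    ∃ x ∈ segment ℝ a b, Y ∩ eball2 x (ν * enorm2 (a.1 - b.1, a.2 - b.2)) = ∅

/-- A set `Z ⊆ ℝ` such that every interval of length `R ∈ [ρ, L]` contains a point at distance
more than `R / M` from `Z` meets intervals of length `R` in measure at most `(1 - 1/M)^n R`, as
long as there are `n` available scales. -/
lemma volume_inter_Icc_le_of_porous {Z : Set ℝ} {M : ℕ} (hM : 2 ≤ M) {ρ L : ℝ} (hρ : 0 ≤ ρ)
    (hZ : ∀ a R, ρ ≤ R → R ≤ L → ∃ x ∈ Set.Icc a (a + R), ∀ t ∈ Z, R / M < |t - x|)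
    (n : ℕ) : ∀ a R : ℝ, 0 ≤ R → R ≤ L → ρ * M ^ n ≤ R * M →
      volume (Z ∩ Set.Icc a (a + R)) ≤ ENNReal.ofReal ((1 - 1 / (M : ℝ)) ^ n * R) := by
  have hM' : (2 : ℝ) ≤ M := by exact_mod_cast hM
  have hM0 : (0 : ℝ) < M := by linarith
  have hl : 0 ≤ 1 - 1 / (M : ℝ) := by
    rw [sub_nonneg, div_le_one hM0]; linarith
  induction n with
  | zero =>
    intro a R _ _ _
    refine (measure_mono Set.inter_subset_right).trans ?_
    simp
  | succ n ih =>
    intro a R hR hRL hsc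
    have hsc' : ρ * (M : ℝ) ^ n ≤ R := by
      rw [pow_succ, ← mul_assoc] at hsc
      exact le_of_mul_le_mul_right hsc hM0
    have hρR : ρ ≤ R := by
      refine le_trans ?_ hsc'
      exact le_mul_of_one_le_right hρ (one_le_pow₀ (by linarith))
    obtain ⟨x, hx, hxZ⟩ := hZ a R hρR hRL
    have hRM : 0 ≤ R / M := by positivity
    have hpiece : ∀ y ∈ Set.Icc a (a + R), ∃ i < M,
        y ∈ Set.Icc (a + i * (R / M)) (a + i * (R / M) + R / M) := by
      intro y hy
      rcases hRM.eq_or_lt with h0 | hpos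
      · refine ⟨0, by omega, ?_⟩
        have hR0 : R = 0 := by
          rcases div_eq_zero_iff.1 h0.symm with h | h <;> linarith
        subst hR0
        simpa using hy
      rcases hy.2.eq_or_lt with hyR | hyR
      · refine ⟨M - 1, by omega, ?_⟩
        rw [Nat.cast_sub (by omega)]
        have : (M : ℝ) * (R / M) = R := by field_simp
        push_cast
        constructor <;> nlinarith
      · refine ⟨⌊(y - a) / (R / M)⌋₊, ?_, ?_⟩
        · rw [Nat.floor_lt (div_nonneg (by linarith [hy.1]) hRM), div_lt_iff₀ hpos]
          have : (M : ℝ) * (R / M) = R := by field_simp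
          linarith
        · have h1 := Nat.floor_le (div_nonneg (by linarith [hy.1] : 0 ≤ y - a) hRM)
          have h2 := (Nat.lt_floor_add_one ((y - a) / (R / M))).le
          rw [le_div_iff₀ hpos] at h1
          rw [div_le_iff₀ hpos] at h2
          constructor <;> linarith
    obtain ⟨j, hj, hxj⟩ := hpiece x hx
    have hsub : Z ∩ Set.Icc a (a + R) ⊆ ⋃ i ∈ (Finset.range M).erase j,
        Z ∩ Set.Icc (a + i * (R / M)) (a + i * (R / M) + R / M) := by
      rintro y ⟨hyZ, hy⟩
      obtain ⟨i, hi, hyi⟩ := hpiece y hy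
      refine Set.mem_biUnion (x := i) ?_ ⟨hyZ, hyi⟩
      have hne : i ≠ j := by
        rintro rfl
        have := hxZ y hyZ
        rw [lt_abs] at this
        rcases this with h | h <;> linarith [hyi.1, hyi.2, hxj.1, hxj.2]
      simpa [hne] using hi
    have hle : R / M ≤ R := div_le_self hR (by linarith)
    calc volume (Z ∩ Set.Icc a (a + R))
        ≤ ∑ i ∈ (Finset.range M).erase j,
            volume (Z ∩ Set.Icc (a + i * (R / M)) (a + i * (R / M) + R / M)) :=
          (measure_mono hsub).trans (measure_biUnion_finset_le _ _)
      _ ≤ ∑ i ∈ (Finset.range M).erase j,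
            ENNReal.ofReal ((1 - 1 / (M : ℝ)) ^ n * (R / M)) := by
          refine Finset.sum_le_sum fun i _ => ih _ _ hRM (hle.trans hRL) ?_
          rw [div_mul_cancel₀ _ hM0.ne']
          exact hsc'
      _ = ENNReal.ofReal ((1 - 1 / (M : ℝ)) ^ (n + 1) * R) := by
          rw [Finset.sum_const, Finset.card_erase_of_mem (by simpa using hj), Finset.card_range,
            nsmul_eq_mul, ← ENNReal.ofReal_natCast, ← ENNReal.ofReal_mul (by positivity)]
          congr 1
          rw [Nat.cast_sub (by omega)]
          rw [pow_succ]
          push_cast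
          field_simp

open scoped Convolution

lemma contDiff_pd {ψ : ℝ × ℝ → ℝ} (hψ : ContDiff ℝ (⊤ : ℕ∞) ψ) (v : ℝ × ℝ) :
    ContDiff ℝ (⊤ : ℕ∞) (pd v ψ) :=
  (hψ.fderiv_right (m := ((⊤ : ℕ∞) : WithTop ℕ∞)) (by simp)).clm_apply contDiff_const

lemma contDiff_iterate_pd {ψ : ℝ × ℝ → ℝ} (hψ : ContDiff ℝ (⊤ : ℕ∞) ψ) (v : ℝ × ℝ) (n : ℕ) :
    ContDiff ℝ (⊤ : ℕ∞) ((pd v)^[n] ψ) := by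
  induction n with
  | zero => exact hψ
  | succ n ih => rw [Function.iterate_succ_apply']; exact contDiff_pd ih v

lemma tsupport_iterate_pd_subset (ψ : ℝ × ℝ → ℝ) (v : ℝ × ℝ) (n : ℕ) :
    tsupport ((pd v)^[n] ψ) ⊆ tsupport ψ := by
  induction n with
  | zero => exact subset_rfl
  | succ n ih =>
    rw [Function.iterate_succ_apply']
    exact (tsupport_fderiv_apply_subset ℝ v).trans ih

lemma hasCompactSupport_iterate_pd {ψ : ℝ × ℝ → ℝ} (hψ : HasCompactSupport ψ) (v : ℝ × ℝ)
    (n : ℕ) : HasCompactSupport ((pd v)^[n] ψ) :=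
  hψ.of_isClosed_subset (isClosed_tsupport _) (tsupport_iterate_pd_subset ψ v n)

lemma iterate_pd_const_mul_comp_smul {ψ : ℝ × ℝ → ℝ} (hψ : ContDiff ℝ (⊤ : ℕ∞) ψ) (v : ℝ × ℝ)
    (c a : ℝ) (n : ℕ) :
    (pd v)^[n] (fun p => c * ψ (a • p)) = fun p => c * a ^ n * (pd v)^[n] ψ (a • p) := by
  induction n with
  | zero => simp
  | succ n ih =>
    rw [Function.iterate_succ_apply', Function.iterate_succ_apply', ih]
    funext p
    have hd : Differentiable ℝ ((pd v)^[n] ψ) :=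
      (contDiff_iterate_pd hψ v n).differentiable (by simp)
    have hd' : DifferentiableAt ℝ (fun p => (pd v)^[n] ψ (a • p)) p :=
      (hd (a • p)).comp p (differentiableAt_id.const_smul a)
    simp only [pd]
    rw [fderiv_const_mul hd', fderiv_comp_smul]
    simp
    ring

lemma pd_convolution {f g : ℝ × ℝ → ℝ} (hf : LocallyIntegrable f) (hg : ContDiff ℝ (⊤ : ℕ∞) g)
    (hcg : HasCompactSupport g) (v : ℝ × ℝ) :
    pd v (f ⋆[ContinuousLinearMap.mul ℝ ℝ, volume] g) =
      f ⋆[ContinuousLinearMap.mul ℝ ℝ, volume] pd v g := by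
  funext p
  have h1 : ContDiff ℝ 1 g := hg.of_le (by exact_mod_cast le_top)
  rw [pd, (hcg.hasFDerivAt_convolution_right _ hf h1 p).fderiv,
    convolution_precompR_apply _ hf (hcg.fderiv ℝ) (h1.continuous_fderiv one_ne_zero)]
  rfl

lemma iterate_pd_convolution {f g : ℝ × ℝ → ℝ} (hf : LocallyIntegrable f)
    (hg : ContDiff ℝ (⊤ : ℕ∞) g) (hcg : HasCompactSupport g) (v : ℝ × ℝ) (n : ℕ) :
    (pd v)^[n] (f ⋆[ContinuousLinearMap.mul ℝ ℝ, volume] g) =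
      f ⋆[ContinuousLinearMap.mul ℝ ℝ, volume] (pd v)^[n] g := by
  induction n with
  | zero => rfl
  | succ n ih =>
    rw [Function.iterate_succ_apply', Function.iterate_succ_apply', ih,
      pd_convolution hf (contDiff_iterate_pd hg v n) (hasCompactSupport_iterate_pd hcg v n)]

lemma abs_indicator_convolution_le (E : Set (ℝ × ℝ)) {g : ℝ × ℝ → ℝ} (hg : Integrable g)
    (p : ℝ × ℝ) :
    |(E.indicator 1 ⋆[ContinuousLinearMap.mul ℝ ℝ, volume] g) p| ≤ ∫ q, |g q| := by
  rw [convolution_def, ← integral_sub_left_eq_self (fun q => |g q|) volume p, ← Real.norm_eq_abs]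
  refine norm_integral_le_of_norm_le (hg.abs.comp_sub_left p) (Filter.Eventually.of_forall ?_)
  intro t
  by_cases ht : t ∈ E <;> simp [ht]

/-- Smooth cutoff functions of an arbitrary set at scale `r`, with uniform derivative bounds. -/
lemma exists_smooth_cutoff : ∃ C : ℝ, 0 ≤ C ∧ ∀ (S : Set (ℝ × ℝ)) (r : ℝ), 0 < r →
    ∃ η : ℝ × ℝ → ℝ, ContDiff ℝ (⊤ : ℕ∞) η ∧ (∀ p, 0 ≤ η p) ∧ (∀ p, η p ≤ 1) ∧
      (∀ p ∈ S, η p = 1) ∧ (∀ p, η p ≠ 0 → ∃ y ∈ S, dist p y ≤ r) ∧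
      ∀ γ₁ γ₂ : ℕ, γ₁ + γ₂ ≤ 3 → ∀ p,
        |(pd (1, 0))^[γ₁] ((pd (0, 1))^[γ₂] η) p| ≤ C * r⁻¹ ^ (γ₁ + γ₂) := by
  let b : ContDiffBump (0 : ℝ × ℝ) := ⟨1 / 4, 1 / 2, by norm_num, by norm_num⟩
  let φ : ℝ × ℝ → ℝ := b.normed volume
  have hφ : ContDiff ℝ (⊤ : ℕ∞) φ := b.contDiff_normed
  have hcφ : HasCompactSupport φ := b.hasCompactSupport_normed
  have hsφ : ∀ x, φ x ≠ 0 → ‖x‖ < 1 / 2 := by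
    intro x hx
    have : x ∈ Function.support φ := hx
    rw [b.support_normed_eq] at this
    exact mem_ball_zero_iff.1 this
  have hintφ : Integrable φ := b.integrable_normed
  let D : ℕ → ℕ → ℝ × ℝ → ℝ := fun i j => (pd (1, 0))^[i] ((pd (0, 1))^[j] φ)
  have hD : ∀ i j, Integrable (D i j) := fun i j =>
    (contDiff_iterate_pd (contDiff_iterate_pd hφ _ _) _ _).continuous.integrable_of_hasCompactSupport
      (hasCompactSupport_iterate_pd (hasCompactSupport_iterate_pd hcφ _ _) _ _)
  have hD0 : ∀ i j, 0 ≤ ∫ q, |D i j q| := fun i j => integral_nonneg fun q => abs_nonneg _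
  refine ⟨∑ i ∈ Finset.range 4, ∑ j ∈ Finset.range 4, ∫ q, |D i j q|,
    Finset.sum_nonneg fun i _ => Finset.sum_nonneg fun j _ => hD0 i j, ?_⟩
  intro S r hr
  let E : Set (ℝ × ℝ) := ⋃ y ∈ S, Metric.ball (r⁻¹ • y) (1 / 2)
  have hE : MeasurableSet E := (isOpen_biUnion fun _ _ => Metric.isOpen_ball).measurableSet
  have hf : LocallyIntegrable (E.indicator (1 : ℝ × ℝ → ℝ)) :=
    (locallyIntegrable_const (1 : ℝ)).indicator hE
  let u : ℝ × ℝ → ℝ := E.indicator 1 ⋆[ContinuousLinearMap.mul ℝ ℝ, volume] φ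
  have hu : ContDiff ℝ (⊤ : ℕ∞) u := hcφ.contDiff_convolution_right _ hf hφ
  have hudef : ∀ x, u x = ∫ t, E.indicator 1 t * φ (x - t) := fun x => rfl
  have hintφ1 : ∫ q, |φ q| = 1 := by
    rw [← b.integral_normed (μ := (volume : Measure (ℝ × ℝ)))]
    exact integral_congr_ae (Filter.Eventually.of_forall fun q =>
      abs_of_nonneg (b.nonneg_normed q))
  refine ⟨fun p => u (r⁻¹ • p), hu.comp (contDiff_const_smul _), ?_, ?_, ?_, ?_, ?_⟩
  · intro p
    change 0 ≤ u (r⁻¹ • p)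
    rw [hudef]
    refine integral_nonneg fun t => mul_nonneg ?_ (b.nonneg_normed _)
    exact Set.indicator_nonneg (fun _ _ => zero_le_one) t
  · intro p
    exact (le_abs_self _).trans ((abs_indicator_convolution_le E hintφ _).trans_eq hintφ1)
  · intro p hp
    change u (r⁻¹ • p) = 1
    rw [hudef, ← b.integral_normed (μ := (volume : Measure (ℝ × ℝ))),
      ← integral_sub_left_eq_self (b.normed volume) volume (r⁻¹ • p)]
    refine integral_congr_ae (Filter.Eventually.of_forall fun t => ?_)
    change E.indicator 1 t * φ (r⁻¹ • p - t) = φ (r⁻¹ • p - t)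
    by_cases h0 : φ (r⁻¹ • p - t) = 0
    · rw [h0, mul_zero]
    · have ht : t ∈ E := by
        refine Set.mem_biUnion hp ?_
        rw [Metric.mem_ball, dist_comm, dist_eq_norm]
        exact hsφ _ h0
      simp [ht]
  · intro p hp
    have hex : ∃ t, E.indicator 1 t * φ (r⁻¹ • p - t) ≠ 0 := by
      by_contra! hall
      exact hp (by change u (r⁻¹ • p) = 0; rw [hudef]; simp [hall])
    obtain ⟨t, ht⟩ := hex
    have htE : t ∈ E := by
      by_contra h
      exact ht (by simp [h])
    have hφt := hsφ _ (right_ne_zero_of_mul ht)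
    obtain ⟨y, hy, hty⟩ := Set.mem_iUnion₂.1 htE
    refine ⟨y, hy, ?_⟩
    rw [← dist_eq_norm] at hφt
    rw [Metric.mem_ball] at hty
    have h1 : dist (r⁻¹ • p) (r⁻¹ • y) ≤ 1 := by
      linarith [dist_triangle (r⁻¹ • p) t (r⁻¹ • y)]
    rw [dist_smul₀, Real.norm_eq_abs, abs_of_pos (inv_pos.2 hr), inv_mul_le_iff₀ hr] at h1
    simpa using h1
  · intro i j hij p
    have key : (pd (1, 0))^[i] ((pd (0, 1))^[j] (fun p => u (r⁻¹ • p))) =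
        fun p => r⁻¹ ^ j * r⁻¹ ^ i *
          (E.indicator 1 ⋆[ContinuousLinearMap.mul ℝ ℝ, volume] D i j) (r⁻¹ • p) := by
      have h1 := iterate_pd_const_mul_comp_smul hu (0, 1) 1 r⁻¹ j
      simp only [one_mul] at h1
      rw [h1, iterate_pd_const_mul_comp_smul (contDiff_iterate_pd hu _ _),
        iterate_pd_convolution hf hφ hcφ,
        iterate_pd_convolution hf (contDiff_iterate_pd hφ _ _)
          (hasCompactSupport_iterate_pd hcφ _ _)]
    have hpos : 0 ≤ r⁻¹ ^ (i + j) := by positivity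
    rw [key, abs_mul, ← pow_add, add_comm j i, abs_of_nonneg hpos, mul_comm]
    refine mul_le_mul_of_nonneg_right ?_ hpos
    refine (abs_indicator_convolution_le E (hD i j) _).trans ?_
    refine le_trans ?_ (Finset.single_le_sum
      (f := fun i => ∑ j ∈ Finset.range 4, ∫ q, |D i j q|)
      (fun i _ => Finset.sum_nonneg fun j _ => hD0 i j) (Finset.mem_range.2 (by omega : i < 4)))
    exact Finset.single_le_sum (f := fun j => ∫ q, |D i j q|) (fun j _ => hD0 i j)
      (Finset.mem_range.2 (by omega : j < 4))

lemma enorm2_eq_norm (p : ℝ × ℝ) : enorm2 p = ‖(⟨p.1, p.2⟩ : ℂ)‖ := by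
  rw [Complex.norm_eq_sqrt_sq_add_sq, enorm2]

lemma enorm2_sub_le (p q s : ℝ × ℝ) :
    enorm2 (p.1 - s.1, p.2 - s.2) ≤
      enorm2 (p.1 - q.1, p.2 - q.2) + enorm2 (q.1 - s.1, q.2 - s.2) := by
  simp only [enorm2_eq_norm]
  refine le_of_eq_of_le (congrArg _ ?_) (norm_add_le _ _)
  apply Complex.ext <;> simp

lemma enorm2_polar (t θ : ℝ) : enorm2 (t * Real.cos θ, t * Real.sin θ) = |t| := by
  rw [enorm2, ← Real.sqrt_sq_eq_abs]
  congr 1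
  linear_combination t ^ 2 * Real.cos_sq_add_sin_sq θ

lemma norm_le_enorm2 (p : ℝ × ℝ) : ‖p‖ ≤ enorm2 p := by
  rw [Prod.norm_def, enorm2]
  refine max_le (Real.le_sqrt_of_sq_le ?_) (Real.le_sqrt_of_sq_le ?_) <;>
    rw [Real.norm_eq_abs, sq_abs] <;> nlinarith [sq_nonneg p.1, sq_nonneg p.2]

lemma enorm2_le_two_mul_norm (p : ℝ × ℝ) : enorm2 p ≤ 2 * ‖p‖ := by
  rw [enorm2_eq_norm]
  refine (Complex.norm_le_abs_re_add_abs_im _).trans ?_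
  have h1 : |p.1| ≤ ‖p‖ := norm_fst_le p
  have h2 : |p.2| ≤ ‖p‖ := norm_snd_le p
  simp only
  linarith

/-- The radial line in direction `θ` spends little time near a line porous set. -/
lemma volume_radial_inter_le {ν H : ℝ} (hν : 0 < ν) {Y : Set (ℝ × ℝ)} (hY : LinePorous2 ν 1 H Y)
    {M : ℕ} (hM2 : 2 ≤ M) (hM : 4 ≤ ν * M) {r L : ℝ} (hr : ν ≤ 2 * r) (hL : 0 < L) (hLH : L ≤ H)
    {n : ℕ} (hn : 2 * r / ν * M ^ n ≤ L * M) (θ : ℝ) :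
    volume ({t : ℝ | ∃ y ∈ Y, enorm2 (t * Real.cos θ - y.1, t * Real.sin θ - y.2) ≤ r} ∩
      Set.Icc (-(4 * L)) (4 * L)) ≤ ENNReal.ofReal (8 * ((1 - 1 / (M : ℝ)) ^ n * L)) := by
  set Z := {t : ℝ | ∃ y ∈ Y, enorm2 (t * Real.cos θ - y.1, t * Real.sin θ - y.2) ≤ r}
  have hM0 : (0 : ℝ) < M := by
    have : 0 < M := by omega
    exact_mod_cast this
  have hρ : 1 ≤ 2 * r / ν := by rwa [one_le_div hν]
  have hZ : ∀ a R, 2 * r / ν ≤ R → R ≤ L →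
      ∃ x ∈ Set.Icc a (a + R), ∀ t ∈ Z, R / M < |t - x| := by
    intro a R hR hRL
    have hR0 : 0 < R := by linarith
    have hlen : enorm2 (a * Real.cos θ - (a + R) * Real.cos θ,
        a * Real.sin θ - (a + R) * Real.sin θ) = R := by
      rw [← sub_mul, ← sub_mul, enorm2_polar, abs_sub_comm, abs_of_pos] <;> linarith
    obtain ⟨x, ⟨u, v, hu, hv, huv, rfl⟩, hx⟩ :=
      hY (a * Real.cos θ, a * Real.sin θ) ((a + R) * Real.cos θ, (a + R) * Real.sin θ)
        (by rw [Set.mem_Icc, hlen]; exact ⟨by linarith, by linarith⟩)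
    simp only [hlen] at hx
    have hu' : u = 1 - v := by linarith
    subst hu'
    refine ⟨a + v * R, ⟨by nlinarith, by nlinarith⟩, ?_⟩
    rintro t ⟨y, hyY, hy⟩
    by_contra! hle
    have hmem : y ∈ Y ∩ eball2 ((1 - v) • (a * Real.cos θ, a * Real.sin θ) +
        v • ((a + R) * Real.cos θ, (a + R) * Real.sin θ)) (ν * R) := by
      refine ⟨hyY, ?_⟩
      have hpt : (1 - v) • (a * Real.cos θ, a * Real.sin θ) +
          v • ((a + R) * Real.cos θ, (a + R) * Real.sin θ) =
          ((a + v * R) * Real.cos θ, (a + v * R) * Real.sin θ) := by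
        ext <;> simp <;> ring
      rw [hpt]
      change enorm2 _ < _
      have h1 := enorm2_sub_le y (t * Real.cos θ, t * Real.sin θ)
        ((a + v * R) * Real.cos θ, (a + v * R) * Real.sin θ)
      have h2 : enorm2 (y.1 - t * Real.cos θ, y.2 - t * Real.sin θ) ≤ r := by
        convert hy using 1
        unfold enorm2
        congr 1
        ring
      simp only [← sub_mul, enorm2_polar] at h1 ⊢
      have h3 : R / M ≤ ν * R / 4 := by
        rw [div_le_iff₀ hM0]
        nlinarith
      have h4 : 2 * r ≤ R * ν := by rwa [div_le_iff₀ hν] at hR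
      nlinarith [mul_pos hν hR0]
    rw [hx] at hmem
    exact hmem
  have hcover : Z ∩ Set.Icc (-(4 * L)) (4 * L) ⊆ ⋃ i ∈ Finset.range 8,
      Z ∩ Set.Icc (-(4 * L) + i * L) (-(4 * L) + i * L + L) := by
    rintro t ⟨htZ, ht⟩
    rcases ht.2.eq_or_lt with h4 | h4
    · refine Set.mem_biUnion (x := 7) (by simp) ⟨htZ, ?_⟩
      constructor <;> push_cast <;> linarith
    · have h0 : 0 ≤ (t + 4 * L) / L := div_nonneg (by linarith [ht.1]) hL.le
      refine Set.mem_biUnion (x := ⌊(t + 4 * L) / L⌋₊) ?_ ⟨htZ, ?_⟩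
      · simp only [Finset.coe_range, Set.mem_Iio]
        rw [Nat.floor_lt h0, div_lt_iff₀ hL]
        push_cast
        linarith
      · have h1 := Nat.floor_le h0
        have h2 := (Nat.lt_floor_add_one ((t + 4 * L) / L)).le
        rw [le_div_iff₀ hL] at h1
        rw [div_le_iff₀ hL] at h2
        constructor <;> linarith
  calc volume (Z ∩ Set.Icc (-(4 * L)) (4 * L))
      ≤ ∑ i ∈ Finset.range 8, volume (Z ∩ Set.Icc (-(4 * L) + i * L) (-(4 * L) + i * L + L)) :=
        (measure_mono hcover).trans (measure_biUnion_finset_le _ _)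
    _ ≤ ∑ i ∈ Finset.range 8, ENNReal.ofReal ((1 - 1 / (M : ℝ)) ^ n * L) :=
        Finset.sum_le_sum fun i _ =>
          volume_inter_Icc_le_of_porous hM2 (by linarith) hZ n _ _ hL.le le_rfl hn
    _ = ENNReal.ofReal (8 * ((1 - 1 / (M : ℝ)) ^ n * L)) := by
        rw [Finset.sum_const, Finset.card_range, nsmul_eq_mul, ENNReal.ofReal_mul (p := 8) (by norm_num)]
        norm_num

lemma isClosed_annulus (k : ℕ) : IsClosed (annulus k) := by
  have hc : Continuous fun p : ℝ × ℝ => Real.sqrt (p.1 ^ 2 + p.2 ^ 2) := by fun_prop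
  exact (isClosed_le continuous_const hc).inter (isClosed_le hc continuous_const)

lemma isCompact_annulus (k : ℕ) : IsCompact (annulus k) := by
  refine (isCompact_closedBall (0 : ℝ × ℝ) (2 ^ (k + 1))).of_isClosed_subset
    (isClosed_annulus k) fun p hp => ?_
  rw [mem_closedBall_zero_iff]
  exact (norm_le_enorm2 p).trans hp.2

lemma mem_annulus_iff {k : ℕ} {p : ℝ × ℝ} :
    p ∈ annulus k ↔ (2 : ℝ) ^ k / 2 ≤ enorm2 p ∧ enorm2 p ≤ 2 * 2 ^ k := by
  rw [← pow_succ', annulus, Set.mem_ofPred_eq, zpow_sub_one₀ (by norm_num), zpow_natCast,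
    ← div_eq_mul_inv]
  rfl

/-- The scaling estimate behind the symbol bounds: a bump of height `6Kκ³` and width `Kκ/8`
has three derivatives under control at points of size comparable to `K`. -/
lemma zpow_mul_height_le {W K κ C : ℝ} (hK : 0 < K) (hκ : 0 < κ) (hκ1 : κ ≤ 1) (hC : 0 ≤ C)
    (hW1 : K / 2 ≤ W) (hW2 : W ≤ 4 * K) {i j : ℕ} (hij : i + j ≤ 3) :
    W ^ ((i + j : ℤ) - 1) * (6 * K * κ ^ 3 * (C * (K * κ / 8)⁻¹ ^ (i + j))) ≤ 49152 * C := by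
  have hW : 0 < W := by linarith
  obtain ⟨m, hm⟩ : ∃ m, m = i + j := ⟨_, rfl⟩
  have hm' : ((i : ℤ) + j) = m := by rw [hm]; push_cast; rfl
  rw [hm', ← hm]
  rw [← hm] at hij
  have hx : W / K ≤ 4 := by rwa [div_le_iff₀ hK]
  have hx' : K / W ≤ 2 := by rw [div_le_iff₀ hW]; linarith
  have hx0 : 0 ≤ W / K := by positivity
  have hκ2 : κ ^ 2 ≤ 1 := pow_le_one₀ hκ.le hκ1
  have hκ3 : κ ^ 3 ≤ 1 := pow_le_one₀ hκ.le hκ1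
  interval_cases m
  · have : W ^ ((0 : ℕ) - 1 : ℤ) * (6 * K * κ ^ 3 * (C * (K * κ / 8)⁻¹ ^ 0)) =
        6 * C * (K / W * κ ^ 3) := by
      simp
      field_simp
    rw [this]
    have : K / W * κ ^ 3 ≤ 2 * 1 := by gcongr
    nlinarith
  · have : W ^ ((1 : ℕ) - 1 : ℤ) * (6 * K * κ ^ 3 * (C * (K * κ / 8)⁻¹ ^ 1)) =
        48 * C * κ ^ 2 := by
      simp
      field_simp
      ring
    rw [this]
    nlinarith
  · have : W ^ ((2 : ℕ) - 1 : ℤ) * (6 * K * κ ^ 3 * (C * (K * κ / 8)⁻¹ ^ 2)) =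
        384 * C * (W / K * κ) := by
      norm_num
      field_simp
      ring
    rw [this]
    have : W / K * κ ≤ 4 * 1 := by gcongr
    nlinarith
  · have : W ^ ((3 : ℕ) - 1 : ℤ) * (6 * K * κ ^ 3 * (C * (K * κ / 8)⁻¹ ^ 3)) =
        3072 * C * (W / K) ^ 2 := by
      rw [show ((3 : ℕ) - 1 : ℤ) = (2 : ℕ) by norm_num, zpow_natCast]
      field_simp
      ring
    rw [this]
    have : (W / K) ^ 2 ≤ 4 ^ 2 := by gcongr
    nlinarith

/-- The geometric decay along `M`-adic scales, expressed as a power of the final scale. -/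
lemma exists_scale_count {M : ℕ} (hM : 2 ≤ M) {γ : ℝ} (hγ : 0 < γ)
    (hMγ : 1 - 1 / (M : ℝ) = (M : ℝ) ^ (-γ)) {κ : ℝ} (hκ : 0 < κ) (hκ1 : κ ≤ 1) :
    ∃ n : ℕ, κ * (M : ℝ) ^ n ≤ 1 ∧ (1 - 1 / (M : ℝ)) ^ n ≤ (M : ℝ) ^ γ * κ ^ γ := by
  have hM1 : (1 : ℝ) < M := by exact_mod_cast (by omega : 1 < M)
  have hM0 : (0 : ℝ) < M := by linarith
  obtain ⟨n, hn1, hn2⟩ := exists_nat_pow_near ((one_le_inv₀ hκ).2 hκ1) hM1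
  refine ⟨n, ?_, ?_⟩
  · rwa [← le_inv_mul_iff₀ hκ, mul_one]
  · have hmul : (1 : ℝ) ≤ κ * M ^ (n + 1) := by
      rw [← inv_mul_le_iff₀ hκ, mul_one]
      exact hn2.le
    rw [hMγ, Real.rpow_neg hM0.le, inv_pow, inv_le_iff_one_le_mul₀ (by positivity),
      ← Real.rpow_natCast, ← Real.rpow_mul hM0.le, mul_comm γ, Real.rpow_mul hM0.le,
      ← Real.mul_rpow hM0.le hκ.le, ← Real.mul_rpow (by positivity) (by positivity),
      Real.rpow_natCast]
    refine Real.one_le_rpow ?_ hγ.le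
    calc (1 : ℝ) ≤ κ * M ^ (n + 1) := hmul
      _ = _ := by ring

lemma neg_le_xray_invSq {ω : ℝ × ℝ → ℝ} {k : ℕ} {B V : ℝ} {Z : Set ℝ} {θ : ℝ} (hB : 0 ≤ B)
    (hV : 0 ≤ V) (hω : ∀ p, |ω p| ≤ B) (hsupp : ∀ p, ω p ≠ 0 → p ∈ annulus k)
    (hZ : ∀ t : ℝ, ω (t * Real.cos θ, t * Real.sin θ) ≠ 0 → t ∈ Z)
    (hvol : volume (Z ∩ Set.Icc (-(2 * 2 ^ k)) (2 * 2 ^ k)) ≤ ENNReal.ofReal V) :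
    -(4 / (2 ^ k) ^ 2 * B * V) ≤ xray (invSq ω) 0 θ := by
  have hK : (0 : ℝ) < 2 ^ k := by positivity
  set f : ℝ → ℝ := fun t => (t ^ 2)⁻¹ * ω (t * Real.cos θ, t * Real.sin θ) with hf
  have hx : xray (invSq ω) 0 θ = ∫ t, f t := by
    rw [xray]
    congr 1
    funext t
    have h1 : (t * Real.cos θ) ^ 2 + (t * Real.sin θ) ^ 2 = t ^ 2 := by
      linear_combination t ^ 2 * Real.cos_sq_add_sin_sq θ
    simp only [invSq, zero_mul, sub_zero, add_zero, h1, hf]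
  have hmem : ∀ t, ω (t * Real.cos θ, t * Real.sin θ) ≠ 0 →
      (2 : ℝ) ^ k / 2 ≤ |t| ∧ |t| ≤ 2 * 2 ^ k := fun t ht => by
    have := mem_annulus_iff.1 (hsupp _ ht)
    rwa [enorm2_polar] at this
  have hzero : ∀ t, t ∉ Z ∩ Set.Icc (-(2 * 2 ^ k)) (2 * 2 ^ k) → f t = 0 := by
    intro t ht
    by_contra h
    have h' : ω (t * Real.cos θ, t * Real.sin θ) ≠ 0 := right_ne_zero_of_mul h
    exact ht ⟨hZ t h', abs_le.1 (hmem t h').2⟩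
  have hbound : ∀ t ∈ Z ∩ Set.Icc (-(2 * 2 ^ k)) (2 * 2 ^ k), ‖f t‖ ≤ 4 / (2 ^ k) ^ 2 * B := by
    intro t _
    by_cases h : ω (t * Real.cos θ, t * Real.sin θ) = 0
    · simp only [hf, h, mul_zero, norm_zero]
      positivity
    · have h2 := (hmem t h).1
      have h3 : (t ^ 2)⁻¹ ≤ 4 / (2 ^ k) ^ 2 := by
        rw [← sq_abs, ← one_div, div_le_div_iff₀ (pow_pos (by linarith) _) (by positivity)]
        nlinarith
      simp only [hf, norm_mul, Real.norm_eq_abs]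
      rw [abs_of_nonneg (inv_nonneg.2 (sq_nonneg t))]
      gcongr
      exact hω _
  rw [hx, ← setIntegral_eq_integral_of_forall_compl_eq_zero hzero]
  have hfin : volume (Z ∩ Set.Icc (-(2 * 2 ^ k)) (2 * 2 ^ k)) < ⊤ :=
    hvol.trans_lt ENNReal.ofReal_lt_top
  have h := norm_setIntegral_le_of_norm_le_const hfin hbound
  have hreal : volume.real (Z ∩ Set.Icc (-(2 * 2 ^ k)) (2 * 2 ^ k)) ≤ V :=
    ENNReal.toReal_le_of_le_ofReal hV hvol
  have h' : 4 / (2 ^ k) ^ 2 * B * volume.real (Z ∩ Set.Icc (-(2 * 2 ^ k)) (2 * 2 ^ k)) ≤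
      4 / (2 ^ k) ^ 2 * B * V := by gcongr
  exact (abs_le.1 (h.trans h')).1

/-- The piece of the weight at the dyadic scale `2 ^ k`, of relative width `κ`. -/
lemma exists_weight_at_scale {ν : ℝ} (hν : ν ∈ Set.Ioo (0 : ℝ) (1 / 10)) :
    ∃ γ : ℝ, 0 < γ ∧ ∃ C : ℝ, 0 ≤ C ∧ ∀ (H : ℝ) (Y : Set (ℝ × ℝ)), Y ⊆ eball2 (0, 0) H →
      LinePorous2 ν 1 H Y → ∀ (k : ℕ) (κ : ℝ), 0 < κ → κ ≤ 1 → 1 ≤ 2 ^ k * κ →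
      ∃ ω : ℝ × ℝ → ℝ, ContDiff ℝ (⊤ : ℕ∞) ω ∧ (∀ p, ω p ≤ 0) ∧
        (H ≤ 3 / 4 * 2 ^ k → ω = 0) ∧ tsupport ω ⊆ annulus k ∧ KNle ω C ∧
        qOf ω ≤ C * κ ^ (3 + γ) ∧
        ∀ p ∈ Y, 3 / 4 * 2 ^ k ≤ enorm2 p → enorm2 p ≤ 3 / 2 * 2 ^ k →
          ω p = -(6 * 2 ^ k * κ ^ 3) := by
  obtain ⟨C₀, hC₀, hcut⟩ := exists_smooth_cutoff
  obtain ⟨hν0, hν1⟩ := hν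
  obtain ⟨M, hM⟩ := exists_nat_ge (4 / ν)
  have hνM : 4 ≤ ν * M := by rwa [div_le_iff₀' hν0] at hM
  have hM2r : (2 : ℝ) ≤ M := by nlinarith
  have hM2 : 2 ≤ M := by exact_mod_cast hM2r
  have hM0 : (0 : ℝ) < M := by linarith
  have hl0 : 0 < 1 - 1 / (M : ℝ) := by
    rw [sub_pos, div_lt_one hM0]; linarith
  have hl1 : 1 - 1 / (M : ℝ) < 1 := by
    have : 0 < 1 / (M : ℝ) := by positivity
    linarith
  have hlogM : 0 < Real.log M := Real.log_pos (by linarith)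
  set γ : ℝ := -Real.log (1 - 1 / (M : ℝ)) / Real.log M with hγdef
  have hγ : 0 < γ := div_pos (neg_pos.2 (Real.log_neg hl0 hl1)) hlogM
  have hMγ : 1 - 1 / (M : ℝ) = (M : ℝ) ^ (-γ) := by
    rw [Real.rpow_def_of_pos hM0, hγdef, ← neg_div, neg_neg, mul_div_cancel₀ _ hlogM.ne',
      Real.exp_log hl0]
  refine ⟨γ, hγ, max (49152 * C₀) (96 * (M : ℝ) ^ γ), le_max_of_le_left (by positivity), ?_⟩
  intro H Y hYH hY k κ hκ hκ1 hκk
  have hK : (0 : ℝ) < 2 ^ k := by positivity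
  have hK1 : (1 : ℝ) ≤ 2 ^ k := one_le_pow₀ (by norm_num)
  set S : Set (ℝ × ℝ) := {y | y ∈ Y ∧ 3 / 4 * 2 ^ k ≤ enorm2 y ∧ enorm2 y ≤ 3 / 2 * 2 ^ k}
  have hSH : ∀ y ∈ S, 3 / 4 * 2 ^ k < H := by
    intro y hy
    have h1 : enorm2 (y.1 - 0, y.2 - 0) < H := hYH hy.1
    simp only [sub_zero] at h1
    exact hy.2.1.trans_lt h1
  obtain ⟨η, hη, hη0, hη1, hηS, hηs, hηd⟩ := hcut S (2 ^ k * κ / 8) (by positivity)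
  set B : ℝ := 6 * 2 ^ k * κ ^ 3 with hBdef
  have hB : 0 ≤ B := by positivity
  set ω : ℝ × ℝ → ℝ := fun p => -B * η p with hω
  have hnear : ∀ p, ω p ≠ 0 → ∃ y ∈ S, enorm2 (p.1 - y.1, p.2 - y.2) ≤ 2 ^ k * κ / 4 := by
    intro p hp
    obtain ⟨y, hy, hd⟩ := hηs p (right_ne_zero_of_mul hp)
    refine ⟨y, hy, ?_⟩
    rw [dist_eq_norm] at hd
    refine (enorm2_le_two_mul_norm (p - y)).trans ?_
    linarith
  have hsupp : ∀ p, ω p ≠ 0 → p ∈ annulus k := by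
    intro p hp
    obtain ⟨y, hy, hd⟩ := hnear p hp
    have h1 := enorm2_sub_le p y (0, 0)
    have h2 := enorm2_sub_le y p (0, 0)
    have h3 : enorm2 (y.1 - p.1, y.2 - p.2) = enorm2 (p.1 - y.1, p.2 - y.2) := by
      unfold enorm2
      congr 1
      ring
    simp only [sub_zero] at h1 h2
    have h4 : (2 : ℝ) ^ k * κ / 4 ≤ 2 ^ k / 4 := by nlinarith
    rw [mem_annulus_iff]
    constructor <;> linarith [hy.2.1, hy.2.2]
  have htsupp : tsupport ω ⊆ annulus k := closure_minimal hsupp (isClosed_annulus k)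
  have hωabs : ∀ p, |ω p| ≤ B := by
    intro p
    rw [hω, abs_mul, abs_neg, abs_of_nonneg hB, abs_of_nonneg (hη0 p)]
    exact mul_le_of_le_one_right hB (hη1 p)
  refine ⟨ω, contDiff_const.mul hη, ?_, ?_, htsupp, ?_, ?_, ?_⟩
  · intro p
    have := mul_nonneg hB (hη0 p)
    simp only [hω]
    linarith
  · intro hH
    funext p
    by_contra hp
    obtain ⟨y, hy, -⟩ := hnear p hp
    linarith [hSH y hy]
  · intro i j hij p
    refine le_trans ?_ (le_max_left _ _)
    by_cases hp : p ∈ annulus k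
    · have hder : (pd (1, 0))^[i] ((pd (0, 1))^[j] ω) =
          fun p => -B * (pd (1, 0))^[i] ((pd (0, 1))^[j] η) p := by
        have h1 := iterate_pd_const_mul_comp_smul hη (0, 1) (-B) 1 j
        have h2 := iterate_pd_const_mul_comp_smul (contDiff_iterate_pd hη (0, 1) j) (1, 0) (-B) 1 i
        simp only [one_smul, one_pow, mul_one] at h1 h2
        rw [h1, h2]
      have hp' := mem_annulus_iff.1 hp
      have hsq : enorm2 p ^ 2 = p.1 ^ 2 + p.2 ^ 2 := Real.sq_sqrt (by positivity)
      have hW1 : (2 : ℝ) ^ k / 2 ≤ Real.sqrt (1 + p.1 ^ 2 + p.2 ^ 2) :=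
        hp'.1.trans (Real.sqrt_le_sqrt (by linarith))
      have hW2 : Real.sqrt (1 + p.1 ^ 2 + p.2 ^ 2) ≤ 4 * 2 ^ k := by
        rw [Real.sqrt_le_left (by positivity)]
        have : 0 ≤ enorm2 p := Real.sqrt_nonneg _
        nlinarith [hp'.2]
      refine le_trans ?_ (zpow_mul_height_le hK hκ hκ1 hC₀ hW1 hW2 hij)
      rw [hder, abs_mul, abs_mul, abs_neg, abs_of_nonneg hB,
        abs_of_nonneg (zpow_nonneg (Real.sqrt_nonneg _) _)]
      gcongr
      exact hηd i j hij p
    · have h0 : (pd (1, 0))^[i] ((pd (0, 1))^[j] ω) p = 0 := by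
        refine image_eq_zero_of_notMem_tsupport fun h => hp (htsupp ?_)
        exact tsupport_iterate_pd_subset _ _ _ (tsupport_iterate_pd_subset _ _ _ h)
      rw [h0, mul_zero, abs_zero]
      positivity
  · refine le_trans ?_ (mul_le_mul_of_nonneg_right (le_max_right _ _) (by positivity))
    rw [qOf, neg_le]
    refine le_ciInf fun θ => ?_
    rcases S.eq_empty_or_nonempty with hempty | ⟨y₀, hy₀⟩
    · have hω0 : ω = 0 := by
        funext p
        by_contra hp
        obtain ⟨y, hy, -⟩ := hnear p hp
        rw [hempty] at hy
        exact hy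
      have : xray (invSq ω) 0 θ = 0 := by simp [hω0, xray, invSq]
      rw [this, neg_nonpos]
      positivity
    · obtain ⟨n, hn1, hn2⟩ := exists_scale_count hM2 hγ hMγ hκ hκ1
      have hn : 2 * (2 ^ k * κ / 4) / ν * (M : ℝ) ^ n ≤ 2 ^ k / 2 * M := by
        rw [div_mul_eq_mul_div, div_le_iff₀ hν0]
        nlinarith
      have hvol := volume_radial_inter_le hν0 hY hM2 hνM (r := 2 ^ k * κ / 4) (L := 2 ^ k / 2)
        (by linarith) (by positivity) (by linarith [hSH y₀ hy₀]) hn θ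
      rw [show (4 : ℝ) * (2 ^ k / 2) = 2 * 2 ^ k by ring] at hvol
      refine le_trans ?_ (neg_le_xray_invSq hB (by positivity) hωabs hsupp ?_ hvol)
      · rw [neg_le_neg_iff, Real.rpow_add hκ]
        have h3 : κ ^ (3 : ℝ) = κ ^ 3 := by exact_mod_cast Real.rpow_natCast κ 3
        calc 4 / (2 ^ k) ^ 2 * B * (8 * ((1 - 1 / (M : ℝ)) ^ n * (2 ^ k / 2)))
            = 96 * κ ^ 3 * (1 - 1 / (M : ℝ)) ^ n := by
              rw [hBdef]
              field_simp
              ring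
          _ ≤ 96 * κ ^ 3 * ((M : ℝ) ^ γ * κ ^ γ) := by gcongr
          _ = _ := by rw [h3]; ring
      · intro t ht
        obtain ⟨y, hy, hd⟩ := hnear _ ht
        exact ⟨y, hy.1, hd⟩
  · intro p hp h1 h2
    simp only [hω, hηS p ⟨hp, h1, h2⟩, mul_one]

lemma div_log_rpow_le {α x : ℝ} (hα0 : 0 < α) (hα1 : α < 1) {k : ℕ} (hk : 2 ≤ k)
    (hx1 : 3 / 4 * 2 ^ k ≤ x) (hx2 : x ≤ 3 / 2 * 2 ^ k) :
    x / Real.log x ^ α ≤ 6 * 2 ^ k * (k : ℝ) ^ (-α) := by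
  have hk' : (2 : ℝ) ≤ k := by exact_mod_cast hk
  have hK : (0 : ℝ) < 2 ^ k := by positivity
  have hlog : (k : ℝ) / 4 ≤ Real.log x := by
    have h1 : Real.log (2 ^ (k - 1)) ≤ Real.log x := by
      refine Real.log_le_log (by positivity) (le_trans ?_ hx1)
      have : (2 : ℝ) ^ k = 2 * 2 ^ (k - 1) := by
        rw [← pow_succ']
        congr 1
        omega
      rw [this]
      have : (0 : ℝ) < 2 ^ (k - 1) := by positivity
      linarith
    rw [Real.log_pow, Nat.cast_sub (by omega)] at h1
    push_cast at h1
    nlinarith [Real.log_two_gt_d9]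
  have hpow : (k : ℝ) ^ α / 4 ≤ Real.log x ^ α := by
    calc (k : ℝ) ^ α / 4 ≤ (k : ℝ) ^ α / 4 ^ α := by
          gcongr
          simpa using Real.rpow_le_rpow_of_exponent_le (by norm_num : (1 : ℝ) ≤ 4) hα1.le
      _ = ((k : ℝ) / 4) ^ α := (Real.div_rpow (by positivity) (by norm_num) α).symm
      _ ≤ Real.log x ^ α := by gcongr
  have hkα : 0 < (k : ℝ) ^ α := by positivity
  calc x / Real.log x ^ α ≤ (3 / 2 * 2 ^ k) / ((k : ℝ) ^ α / 4) := by gcongr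
    _ = 6 * 2 ^ k * (k : ℝ) ^ (-α) := by
      rw [Real.rpow_neg (by positivity)]
      field_simp
      ring

/-- Existence of a dyadic weight `ω = Σ_{k≥1} ω_k` adapted to a line porous set. -/
theorem existence_weight (ν : ℝ) (hν : ν ∈ Set.Ioo 0 (1/10)) :
    ∃ Creg : ℝ, 0 ≤ Creg ∧ ∃ Cgr : ℝ, 0 ≤ Cgr ∧ ∃ α ∈ Set.Ioo (0:ℝ) 1,
    ∀ h : ℝ, h ∈ Set.Ioo 0 (1/100) →
    ∀ Y : Set (ℝ × ℝ), Y ⊆ eball2 (0, 0) h⁻¹ → LinePorous2 ν 1 h⁻¹ Y →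
    ∃ ω : ℕ → ℝ × ℝ → ℝ,
      (∀ k, 1 ≤ k → ContDiff ℝ (⊤ : ℕ∞) (ω k)) ∧
      (∀ k, 1 ≤ k → HasCompactSupport (ω k)) ∧
      (∀ k, 1 ≤ k → ∀ p, ω k p ≤ 0) ∧
      (∃ N, ∀ k, N ≤ k → ω k = 0) ∧
      (∀ k, 1 ≤ k → tsupport (ω k) ⊆ annulus k) ∧
      (∀ k, 1 ≤ k → KNle (ω k) Creg) ∧
      (∑' k : ℕ, qOf (ω (k + 1))) ≤ Cgr ∧
      (∀ p ∈ Y, 10 < enorm2 p →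
        (∑' k : ℕ, ω (k + 1) p) ≤ -(enorm2 p / Real.log (enorm2 p) ^ α)) := by
  obtain ⟨γ, hγ, C, hC, hscale⟩ := exists_weight_at_scale hν
  set α : ℝ := 1 / (1 + γ / 6) with hα
  have hα0 : 0 < α := by positivity
  have hα1 : α < 1 := by rw [hα, div_lt_one (by positivity)]; linarith
  set s : ℝ := α / 3 * (3 + γ) with hs
  have hs1 : 1 < s := by
    rw [hs, hα, div_div, div_mul_eq_mul_div, one_mul, one_lt_div (by positivity)]
    linarith
  have hsum : Summable fun k : ℕ => C * ((k + 1 : ℕ) : ℝ) ^ (-s) :=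
    ((summable_nat_add_iff 1).2 (Real.summable_nat_rpow.2 (by linarith))).mul_left C
  refine ⟨C, hC, ∑' k : ℕ, C * ((k + 1 : ℕ) : ℝ) ^ (-s),
    tsum_nonneg fun k => by positivity, α, ⟨hα0, hα1⟩, ?_⟩
  intro h hh Y hYh hY
  have hκ : ∀ k : ℕ, 1 ≤ k → 0 < (k : ℝ) ^ (-(α / 3)) ∧ (k : ℝ) ^ (-(α / 3)) ≤ 1 ∧
      1 ≤ 2 ^ k * (k : ℝ) ^ (-(α / 3)) := by
    intro k hk
    have hk1 : (1 : ℝ) ≤ k := by exact_mod_cast hk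
    have hk0 : (0 : ℝ) < k := by linarith
    refine ⟨by positivity, Real.rpow_le_one_of_one_le_of_nonpos hk1 (by linarith), ?_⟩
    have h1 : (k : ℝ)⁻¹ ≤ (k : ℝ) ^ (-(α / 3)) := by
      rw [← Real.rpow_neg_one]
      exact Real.rpow_le_rpow_of_exponent_le hk1 (by linarith)
    have h2 : (k : ℝ) ≤ 2 ^ k := by exact_mod_cast Nat.lt_two_pow_self.le
    calc (1 : ℝ) = k * (k : ℝ)⁻¹ := (mul_inv_cancel₀ hk0.ne').symm
      _ ≤ _ := by gcongr
  choose! ω hsmooth hneg hzero hsupp hKN hq hval using fun (k : ℕ) (hk : 1 ≤ k) =>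
    hscale h⁻¹ Y hYh hY k _ (hκ k hk).1 (hκ k hk).2.1 (hκ k hk).2.2
  obtain ⟨N, hN⟩ : ∃ N : ℕ, ∀ k, N ≤ k → ω k = 0 := by
    obtain ⟨N, hN⟩ := pow_unbounded_of_one_lt (2 * h⁻¹) (one_lt_two : (1 : ℝ) < 2)
    refine ⟨N + 1, fun k hk => hzero k (by omega) ?_⟩
    have h1 : (2 : ℝ) ^ N ≤ 2 ^ k := pow_le_pow_right₀ (by norm_num) (by omega)
    have h2 : (0 : ℝ) < 2 ^ k := by positivity
    linarith
  refine ⟨ω, hsmooth, fun k hk => (isCompact_annulus k).of_isClosed_subset (isClosed_tsupport _)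
    (hsupp k hk), hneg, ⟨N, hN⟩, hsupp, hKN, ?_, ?_⟩
  · have hqsum : Summable fun k : ℕ => qOf (ω (k + 1)) := by
      refine summable_of_ne_finset_zero (s := Finset.range N) fun k hk => ?_
      rw [hN (k + 1) (by simp at hk; omega)]
      simp [qOf, xray, invSq]
    refine hqsum.tsum_le_tsum (fun k => ?_) hsum
    refine (hq (k + 1) (by omega)).trans_eq ?_
    rw [← Real.rpow_mul (by positivity), hs, neg_mul]
  · intro p hp hp10
    obtain ⟨n, hn1, hn2⟩ := exists_nat_pow_near (x := 2 / 3 * enorm2 p) (by linarith)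
      (one_lt_two : (1 : ℝ) < 2)
    have hn : 2 ≤ n + 1 := by
      by_contra! hlt
      have : n = 0 := by omega
      subst this
      norm_num at hn2
      linarith
    have h1 : 3 / 4 * 2 ^ (n + 1) ≤ enorm2 p := by rw [pow_succ]; linarith
    have h2 : enorm2 p ≤ 3 / 2 * 2 ^ (n + 1) := by linarith
    have hωsum : Summable fun k : ℕ => -ω (k + 1) p := by
      refine summable_of_ne_finset_zero (s := Finset.range N) fun k hk => ?_
      rw [hN (k + 1) (by simp at hk; omega)]
      simp
    have hle := hωsum.le_tsum n fun j _ => neg_nonneg.2 (hneg (j + 1) (by omega) p)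
    rw [tsum_neg] at hle
    have hv := hval (n + 1) (by omega) p hp h1 h2
    have hpow : (((n + 1 : ℕ) : ℝ) ^ (-(α / 3))) ^ 3 = ((n + 1 : ℕ) : ℝ) ^ (-α) := by
      rw [← Real.rpow_natCast, ← Real.rpow_mul (by positivity)]
      congr 1
      push_cast
      ring
    rw [hpow] at hv
    have hb := div_log_rpow_le hα0 hα1 hn h1 h2
    linarith

end
end

section
/- For every ψ ∈ C_c^∞(ℝ²), every γ, θ ∈ S¹ and every s ∈ ℝ, one has T(V_γ²ψ)(s,θ) = sin²(θ−γ) · T(Δψ)(s,θ), where V_γ := cos(γ) ∂_{x₁} + sin(γ) ∂_{x₂} is the constant directional derivative operator and Δ = ∂_{x₁}² + ∂_{x₂}² is the Laplacian on ℝ². -/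
open MeasureTheory Real

noncomputable section

/-- The Laplacian `Δ = ∂_{x₁}² + ∂_{x₂}²` on `ℝ²`. -/
def lap (ψ : ℝ × ℝ → ℝ) : ℝ × ℝ → ℝ := fun p =>
  pd (1, 0) (pd (1, 0) ψ) p + pd (0, 1) (pd (0, 1) ψ) p

/-- The constant vector field `V_γ = cos γ ∂_{x₁} + sin γ ∂_{x₂}`. -/
def Vdir (γ : ℝ) (ψ : ℝ × ℝ → ℝ) : ℝ × ℝ → ℝ := pd (Real.cos γ, Real.sin γ) ψ

theorem pd_pd_apply {ψ : ℝ × ℝ → ℝ} (hψ : ContDiff ℝ 2 ψ) (u v p : ℝ × ℝ) :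
    pd u (pd v ψ) p = fderiv ℝ (fderiv ℝ ψ) p u v := by
  have hd : DifferentiableAt ℝ (fderiv ℝ ψ) p :=
    (hψ.fderiv_right (m := 1) (by norm_num)).differentiable one_ne_zero p
  change fderiv ℝ (fun y => fderiv ℝ ψ y v) p u = _
  rw [fderiv_clm_apply hd (differentiableAt_const v)]
  simp

theorem ContDiff.pd {ψ : ℝ × ℝ → ℝ} {m n : WithTop ℕ∞} (hψ : ContDiff ℝ n ψ) (hmn : m + 1 ≤ n)
    (v : ℝ × ℝ) : ContDiff ℝ m (pd v ψ) :=
  (hψ.fderiv_right hmn).clm_apply contDiff_const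

theorem HasCompactSupport.pd {ψ : ℝ × ℝ → ℝ} (hsupp : HasCompactSupport ψ) (v : ℝ × ℝ) :
    HasCompactSupport (pd v ψ) :=
  hsupp.fderiv_apply ℝ v

/-- The restriction of a continuous compactly supported function to a line is integrable. -/
theorem integrable_comp_line {g : ℝ × ℝ → ℝ} (hg : Continuous g) (hsupp : HasCompactSupport g)
    (s θ : ℝ) :
    Integrable fun t : ℝ => g (t * cos θ - s * sin θ, t * sin θ + s * cos θ) := by
  have hinv : Function.LeftInverse (fun p : ℝ × ℝ => p.1 * cos θ + p.2 * sin θ)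
      fun t : ℝ => (t * cos θ - s * sin θ, t * sin θ + s * cos θ) := fun t => by
    linear_combination t * sin_sq_add_cos_sq θ
  have hemb := hinv.isClosedEmbedding (by fun_prop) (by fun_prop)
  exact (hg.comp hemb.continuous).integrable_of_hasCompactSupport
    (hsupp.comp_isClosedEmbedding hemb)

/-- The X-ray transform kills derivatives along the direction of integration. -/
theorem xray_pd_direction {g : ℝ × ℝ → ℝ} (hg : ContDiff ℝ 1 g) (hsupp : HasCompactSupport g)
    (s θ : ℝ) : xray (pd (cos θ, sin θ) g) s θ = 0 := by
  refine integral_eq_zero_of_hasDerivAt_of_integrable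
    (f := fun t : ℝ => g (t * cos θ - s * sin θ, t * sin θ + s * cos θ)) (fun t => ?_)
    (integrable_comp_line (hg.pd (m := 0) (by norm_num) _).continuous (hsupp.pd _) s θ)
    (integrable_comp_line hg.continuous hsupp s θ)
  have hline : HasDerivAt (fun t : ℝ => (t * cos θ - s * sin θ, t * sin θ + s * cos θ))
      (cos θ, sin θ) t := by
    simpa using (((hasDerivAt_id t).mul_const (cos θ)).sub_const (s * sin θ)).prodMk
      (((hasDerivAt_id t).mul_const (sin θ)).add_const (s * cos θ))
  exact (hg.differentiable one_ne_zero _).hasFDerivAt.comp_hasDerivAt t hline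

/-- `V_γ²` and `sin²(θ - γ) Δ` differ by a second derivative along `(cos θ, sin θ)` and the
reflection `(cos (2γ - θ), sin (2γ - θ))` of that direction. -/
theorem Vdir_Vdir_eq {ψ : ℝ × ℝ → ℝ} (hψ : ContDiff ℝ 2 ψ) (γ θ : ℝ) (p : ℝ × ℝ) :
    Vdir γ (Vdir γ ψ) p = sin (θ - γ) ^ 2 * lap ψ p +
      pd (cos θ, sin θ) (pd (cos (2 * γ - θ), sin (2 * γ - θ)) ψ) p := by
  have hsymm : fderiv ℝ (fderiv ℝ ψ) p (0, 1) (1, 0) = fderiv ℝ (fderiv ℝ ψ) p (1, 0) (0, 1) :=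
    (hψ.contDiffAt.isSymmSndFDerivAt (by simp)) (0, 1) (1, 0)
  have hdecomp (a b : ℝ) : ((a, b) : ℝ × ℝ) = a • (1, 0) + b • (0, 1) := by simp
  simp only [Vdir, lap, pd_pd_apply hψ]
  rw [hdecomp (cos γ), hdecomp (cos θ), hdecomp (cos (2 * γ - θ))]
  simp only [map_add, map_smul, add_apply, smul_apply,
    smul_eq_mul, hsymm, sin_sub, cos_sub, sin_two_mul, cos_two_mul]
  generalize fderiv ℝ (fderiv ℝ ψ) p (1, 0) (1, 0) = A
  generalize fderiv ℝ (fderiv ℝ ψ) p (1, 0) (0, 1) = B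
  generalize fderiv ℝ (fderiv ℝ ψ) p (0, 1) (0, 1) = C
  linear_combination
    (-A * cos γ ^ 2 - 2 * B * cos γ * sin γ - C * sin γ ^ 2) * sin_sq_add_cos_sq θ +
      (C * sin θ ^ 2 - A * cos θ ^ 2) * sin_sq_add_cos_sq γ

theorem xray_Vdir_sq (ψ : ℝ × ℝ → ℝ) (hψ : ContDiff ℝ (⊤ : ℕ∞) ψ) (hsupp : HasCompactSupport ψ)
    (γ θ s : ℝ) :
    xray (Vdir γ (Vdir γ ψ)) s θ = Real.sin (θ - γ) ^ 2 * xray (lap ψ) s θ := by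
  have h2 : ContDiff ℝ 2 ψ := contDiff_infty.mp hψ 2
  set w : ℝ × ℝ := (cos (2 * γ - θ), sin (2 * γ - θ))
  have hlap : Continuous (lap ψ) :=
    (((h2.pd (m := 1) (by norm_num) _).pd (m := 0) (by norm_num) _).continuous).add
      (((h2.pd (m := 1) (by norm_num) _).pd (m := 0) (by norm_num) _).continuous)
  have hlap_supp : HasCompactSupport (lap ψ) := ((hsupp.pd _).pd _).add ((hsupp.pd _).pd _)
  have hw : ContDiff ℝ 1 (pd w ψ) := h2.pd (by norm_num) w
  have hzero := xray_pd_direction hw (hsupp.pd w) s θ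
  unfold xray at hzero ⊢
  simp only [Vdir_Vdir_eq h2 γ θ]
  rw [integral_add ((integrable_comp_line hlap hlap_supp s θ).const_mul _)
    (integrable_comp_line (hw.pd (m := 0) (by norm_num) _).continuous ((hsupp.pd w).pd _) s θ),
    hzero, add_zero, integral_const_mul]

end
end
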